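/- arXiv:2405.07100 — 2 statements merged into one kernel-verified Lean document; each statement's English description precedes it below -/
import Mathlib

section
/- Let W be an n×n real doubly stochastic matrix and let λ_W denote the ℓ²-operator norm of W − (1/n)𝟙𝟙ᵀ. Let x = (x_1,…,x_n) and δ = (δ_1,…,δ_n) be families of vectors in ℝ^d, let α ∈ (0,1), and define x'_i := ∑_{j=1}^n W_{ij}(x_j + α δ_j). Then for every η > 0, ∑_{i=1}^n ‖x'_i − x_i‖² ≤ 3α²((1 + 1/η) λ_W² + 1) ∑_{i=1}^n ‖δ_i‖² + 3((1 + η) λ_W² + 1) ∑_{i=1}^n ‖x_i − x̄‖², where x̄ is the average of the family x. (Intermediate step in the proof of Lemma 4: bound on the squared successive-iterate difference ‖x^t − x^{t−1}‖².) -/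
/-!
With `m` the average of `x`, `M = W - (1/n) 𝟙 𝟙ᵀ` and `z = (x - m) + α δ`, the increment splits as
`x'_i - x_i = (M z)_i + α δ̄ + (m - x_i)`, because `M` annihilates constant families.
The three terms are separated with `‖a + b + c‖² ≤ 3 (‖a‖² + ‖b‖² + ‖c‖²)`. The first is controlled
by the operator norm of `M`, applied coordinate by coordinate (`sum_norm_sq_deviation_le`), followed
by Young's inequality for `z` (`norm_add_sq_le_young`); the second by convexity of the squared norm
(`card_mul_norm_average_sq_le`).
-/

open Finset

/-- A matrix is doubly stochastic if its entries are nonnegative and every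
row sum and every column sum equals 1. -/
def IsDoublyStochastic {n : ℕ} (W : Matrix (Fin n) (Fin n) ℝ) : Prop :=
  (∀ i j, 0 ≤ W i j) ∧ (∀ i, ∑ j, W i j = 1) ∧ (∀ j, ∑ i, W i j = 1)

/-- `lamW W` is the ℓ²-operator norm of `W - (1/n) 𝟙 𝟙ᵀ`. -/
noncomputable def lamW {n : ℕ} (W : Matrix (Fin n) (Fin n) ℝ) : ℝ :=
  ‖LinearMap.toContinuousLinearMap
    (Matrix.toEuclideanLin (W - Matrix.of (fun _ _ => (n : ℝ)⁻¹)))‖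

/-- The operator norm bound carries over from scalars to families in `ℝ^d`: applying
`W - (1/n) 𝟙 𝟙ᵀ` to such a family amounts to applying it to each of the `d` coordinates. -/
lemma sum_norm_sq_deviation_le {n d : ℕ} (W : Matrix (Fin n) (Fin n) ℝ)
    (v : Fin n → EuclideanSpace ℝ (Fin d)) :
    ∑ i, ‖∑ j, (W i j - (n : ℝ)⁻¹) • v j‖ ^ 2 ≤ lamW W ^ 2 * ∑ i, ‖v i‖ ^ 2 := by
  have key : ∀ k : Fin d,
      ∑ i, (∑ j, (W i j - (n : ℝ)⁻¹) * v j k) ^ 2 ≤ lamW W ^ 2 * ∑ i, (v i k) ^ 2 := by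
    intro k
    have h := (LinearMap.toContinuousLinearMap
      (Matrix.toEuclideanLin (W - Matrix.of (fun _ _ => (n : ℝ)⁻¹)))).le_opNorm
        (WithLp.toLp 2 (fun j => v j k))
    have h2 := pow_le_pow_left₀ (norm_nonneg _) h 2
    rw [mul_pow, EuclideanSpace.norm_sq_eq, EuclideanSpace.norm_sq_eq] at h2
    simpa [lamW, Matrix.toLpLin_apply, Matrix.mulVec, dotProduct, sub_mul] using h2
  simp only [EuclideanSpace.norm_sq_eq, Real.norm_eq_abs, sq_abs]
  rw [Finset.sum_comm, Finset.sum_comm (f := fun i k => (v i k) ^ 2), Finset.mul_sum]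
  refine Finset.sum_le_sum fun k _ => ?_
  simpa using key k

/-- Young's inequality with parameter `η`. -/
lemma norm_add_sq_le_young {E : Type*} [SeminormedAddCommGroup E] (a b : E) {η : ℝ} (hη : 0 < η) :
    ‖a + b‖ ^ 2 ≤ (1 + η) * ‖a‖ ^ 2 + (1 + 1 / η) * ‖b‖ ^ 2 := by
  have h := pow_le_pow_left₀ (norm_nonneg _) (norm_add_le a b) 2
  -- the defect in Young's inequality is the square `(√η ‖a‖ - ‖b‖ / √η)²`
  have h2 : (1 + η) * ‖a‖ ^ 2 + (1 + 1 / η) * ‖b‖ ^ 2 - (‖a‖ + ‖b‖) ^ 2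
      = (η * ‖a‖ - ‖b‖) ^ 2 / η := by
    field_simp
    ring
  have h3 : 0 ≤ (η * ‖a‖ - ‖b‖) ^ 2 / η := by positivity
  linarith

lemma norm_add_add_sq_le {E : Type*} [SeminormedAddCommGroup E] (a b c : E) :
    ‖a + b + c‖ ^ 2 ≤ 3 * (‖a‖ ^ 2 + ‖b‖ ^ 2 + ‖c‖ ^ 2) := by
  have h := pow_le_pow_left₀ (norm_nonneg _) (norm_add₃_le (a := a) (b := b) (c := c)) 2
  nlinarith [sq_nonneg (‖a‖ - ‖b‖), sq_nonneg (‖b‖ - ‖c‖), sq_nonneg (‖a‖ - ‖c‖)]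

lemma card_mul_norm_average_sq_le {n : ℕ} (hn : 1 ≤ n) {E : Type*} [SeminormedAddCommGroup E]
    [NormedSpace ℝ E] (v : Fin n → E) :
    (n : ℝ) * ‖(n : ℝ)⁻¹ • ∑ j, v j‖ ^ 2 ≤ ∑ j, ‖v j‖ ^ 2 := by
  have hn' : (0 : ℝ) < n := by exact_mod_cast hn
  have h := pow_le_pow_left₀ (norm_nonneg _) (norm_sum_le Finset.univ v) 2
  have h2 := sq_sum_le_card_mul_sum_sq (s := Finset.univ) (f := fun j => ‖v j‖)
  simp only [Finset.card_univ, Fintype.card_fin] at h2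
  rw [norm_smul, mul_pow, norm_inv, Real.norm_of_nonneg hn'.le]
  calc (n : ℝ) * ((n : ℝ)⁻¹ ^ 2 * ‖∑ j, v j‖ ^ 2)
      = (n : ℝ)⁻¹ * ‖∑ j, v j‖ ^ 2 := by field_simp
    _ ≤ (n : ℝ)⁻¹ * (n * ∑ j, ‖v j‖ ^ 2) := by
        gcongr
        exact h.trans h2
    _ = ∑ j, ‖v j‖ ^ 2 := by field_simp

theorem stmt10 {n d : ℕ} (hn : 1 ≤ n) (hd : 1 ≤ d)
    (W : Matrix (Fin n) (Fin n) ℝ) (hW : IsDoublyStochastic W)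
    (x δ : Fin n → EuclideanSpace ℝ (Fin d)) (α : ℝ)
    (hα : α ∈ Set.Ioo (0 : ℝ) 1)
    (x' : Fin n → EuclideanSpace ℝ (Fin d))
    (hx' : ∀ i, x' i = ∑ j, W i j • (x j + α • δ j))
    (η : ℝ) (hη : 0 < η) :
    ∑ i, ‖x' i - x i‖ ^ 2 ≤
      3 * α ^ 2 * ((1 + 1 / η) * lamW W ^ 2 + 1) * ∑ i, ‖δ i‖ ^ 2
        + 3 * ((1 + η) * lamW W ^ 2 + 1)
            * ∑ i, ‖x i - (n : ℝ)⁻¹ • ∑ j, x j‖ ^ 2 := by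
  have hn' : (n : ℝ) ≠ 0 := by
    have : n ≠ 0 := by omega
    exact_mod_cast this
  set m := (n : ℝ)⁻¹ • ∑ j, x j with hm
  have hdecomp : ∀ i, x' i - x i =
      (∑ j, (W i j - (n : ℝ)⁻¹) • ((x j - m) + α • δ j))
        + α • ((n : ℝ)⁻¹ • ∑ j, δ j) + (m - x i) := by
    intro i
    -- the constant family `m` is annihilated because the rows of `W` and of `(1/n) 𝟙 𝟙ᵀ` sum to 1
    have hconst : ∑ j, (W i j - (n : ℝ)⁻¹) • m = 0 := by
      rw [← Finset.sum_smul, Finset.sum_sub_distrib, hW.2.1 i]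
      simp [hn']
    have h1 : ∑ j, (W i j - (n : ℝ)⁻¹) • ((x j - m) + α • δ j)
        = ∑ j, W i j • (x j + α • δ j) - (m + α • ((n : ℝ)⁻¹ • ∑ j, δ j))
          - ∑ j, (W i j - (n : ℝ)⁻¹) • m := by
      have hmean : m + α • ((n : ℝ)⁻¹ • ∑ j, δ j) = ∑ j, (n : ℝ)⁻¹ • (x j + α • δ j) := by
        rw [← Finset.smul_sum, Finset.sum_add_distrib, ← Finset.smul_sum, smul_add, ← hm,
          smul_comm α]
      rw [hmean, ← Finset.sum_sub_distrib, ← Finset.sum_sub_distrib]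
      refine Finset.sum_congr rfl fun j _ => ?_
      module
    rw [h1, hconst, hx' i]
    abel
  have hA : ∑ i, ‖∑ j, (W i j - (n : ℝ)⁻¹) • ((x j - m) + α • δ j)‖ ^ 2 ≤
      lamW W ^ 2 * ((1 + η) * ∑ i, ‖x i - m‖ ^ 2
        + (1 + 1 / η) * (α ^ 2 * ∑ i, ‖δ i‖ ^ 2)) := by
    refine (sum_norm_sq_deviation_le W _).trans ?_
    gcongr
    rw [Finset.mul_sum, Finset.mul_sum, Finset.mul_sum, ← Finset.sum_add_distrib]
    refine Finset.sum_le_sum fun i _ => ?_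
    have h := norm_add_sq_le_young (x i - m) (α • δ i) hη
    rwa [norm_smul α, mul_pow, Real.norm_eq_abs, sq_abs] at h
  have hB : (n : ℝ) * ‖α • ((n : ℝ)⁻¹ • ∑ j, δ j)‖ ^ 2 ≤ α ^ 2 * ∑ i, ‖δ i‖ ^ 2 := by
    rw [norm_smul α, mul_pow, Real.norm_eq_abs, sq_abs, mul_left_comm]
    exact mul_le_mul_of_nonneg_left (card_mul_norm_average_sq_le hn δ) (sq_nonneg α)
  have hsum : ∑ i, ‖x' i - x i‖ ^ 2 ≤
      3 * (∑ i, ‖∑ j, (W i j - (n : ℝ)⁻¹) • ((x j - m) + α • δ j)‖ ^ 2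
        + (n : ℝ) * ‖α • ((n : ℝ)⁻¹ • ∑ j, δ j)‖ ^ 2 + ∑ i, ‖x i - m‖ ^ 2) := by
    have hc : (n : ℝ) * ‖α • ((n : ℝ)⁻¹ • ∑ j, δ j)‖ ^ 2
        = ∑ _i : Fin n, ‖α • ((n : ℝ)⁻¹ • ∑ j, δ j)‖ ^ 2 := by simp
    rw [hc, ← Finset.sum_add_distrib, ← Finset.sum_add_distrib, Finset.mul_sum]
    refine Finset.sum_le_sum fun i _ => ?_
    rw [hdecomp i, norm_sub_rev (x i) m]
    exact norm_add_add_sq_le _ _ _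
  calc _ ≤ _ := hsum
    _ ≤ 3 * (lamW W ^ 2 * ((1 + η) * ∑ i, ‖x i - m‖ ^ 2
          + (1 + 1 / η) * (α ^ 2 * ∑ i, ‖δ i‖ ^ 2))
        + α ^ 2 * ∑ i, ‖δ i‖ ^ 2 + ∑ i, ‖x i - m‖ ^ 2) := by gcongr
    _ = _ := by ring
end

section
/- Let n ≥ 1, d ≥ 1, L > 0. Let u_1,…,u_n : ℝ^d → ℝ be differentiable with L-Lipschitz gradients and set u := (1/n)∑_{i=1}^n u_i. Let g_1,…,g_n : ℝ^d → ℝ^d be L-Lipschitz maps. Let x_i, x̂_i, y_i, z_i ∈ ℝ^d (i = 1,…,n), define ŵ_i := g_i(x_i) − g_i(x̂_i) − y_i, x̄ := (1/n)∑ x_i, ȳ := (1/n)∑ y_i, z̄ := (1/n)∑ z_i, m := (1/n)∑_i ∇u_i(x_i), and assume ȳ = z̄. Then (1/n)∑_{i=1}^n ‖∇u(x̂_i) + ŵ_i‖² ≤ (8L²/n)∑_{i=1}^n ‖x̂_i − x_i‖² + (16L²/n)∑_{i=1}^n ‖x_i − x̄‖² + 12‖m − z̄‖² + (12/n)∑_{i=1}^n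 ‖y_i − ȳ‖². (Per-iteration stationarity-gap decomposition from the proof of Theorem 1.) -/
/-!
Write `G = gradient U`, which is the average of the gradients of the `u i` and hence `L`-Lipschitz.
For each `i`,
`G (xhat i) + what i = (G (xhat i) - G (x i)) + (g i (x i) - g i (xhat i)) + (G (x i) - G xbar)
  + (G xbar - m) + (m - zbar) + (ybar - y i)`,
because `ybar = zbar`. The first two terms have norm at most `L * ‖xhat i - x i‖` each and the third
at most `L * ‖x i - xbar‖`; applying `‖a + b‖ ^ 2 ≤ 2 * ‖a‖ ^ 2 + 2 * ‖b‖ ^ 2` repeatedly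
(`norm_sq_split`) gives a pointwise bound with coefficients `8, 8, 8, 8, 8`. The consensus term
`‖G xbar - m‖ ^ 2` does not depend on `i`, and by Jensen's inequality (`norm_sq_average_le`) it is at
most `L ^ 2` times the average of `‖x i - xbar‖ ^ 2`, which brings the coefficient of that
average to `16`.
-/

open Finset

theorem norm_add_sq_le_two {E : Type*} [SeminormedAddCommGroup E] (a b : E) :
    ‖a + b‖ ^ 2 ≤ 2 * ‖a‖ ^ 2 + 2 * ‖b‖ ^ 2 := by
  nlinarith [norm_add_le a b, norm_nonneg (a + b), sq_nonneg (‖a‖ - ‖b‖)]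

/-- Nested doubling: the six summands are grouped as
`(p + q) + ((a + b) + (c + e))`. -/
theorem norm_sq_split {E : Type*} [SeminormedAddCommGroup E] (p q a b c e : E) {R S : ℝ}
    (hp : ‖p‖ ≤ R) (hq : ‖q‖ ≤ R) (ha : ‖a‖ ≤ S) :
    ‖(p + q) + ((a + b) + (c + e))‖ ^ 2 ≤
      8 * R ^ 2 + 8 * S ^ 2 + 8 * ‖b‖ ^ 2 + 8 * ‖c‖ ^ 2 + 8 * ‖e‖ ^ 2 := by
  have hp2 : ‖p‖ ^ 2 ≤ R ^ 2 := by gcongr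
  have hq2 : ‖q‖ ^ 2 ≤ R ^ 2 := by gcongr
  have ha2 : ‖a‖ ^ 2 ≤ S ^ 2 := by gcongr
  linarith [norm_add_sq_le_two (p + q) ((a + b) + (c + e)), norm_add_sq_le_two p q,
    norm_add_sq_le_two (a + b) (c + e), norm_add_sq_le_two a b, norm_add_sq_le_two c e]

/-- The triangle inequality for an average. For `n = 0` both sides vanish since `0⁻¹ = 0`. -/
theorem norm_average_le {E : Type*} [SeminormedAddCommGroup E] [NormedSpace ℝ E] {n : ℕ}
    (v : Fin n → E) : ‖(n : ℝ)⁻¹ • ∑ i, v i‖ ≤ (n : ℝ)⁻¹ * ∑ i, ‖v i‖ := by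
  rw [norm_smul, Real.norm_of_nonneg (by positivity)]
  gcongr
  exact norm_sum_le _ _

/-- Jensen's inequality for the squared norm of an average. -/
theorem norm_sq_average_le {E : Type*} [SeminormedAddCommGroup E] [NormedSpace ℝ E] {n : ℕ}
    (hn : 1 ≤ n) (v : Fin n → E) :
    ‖(n : ℝ)⁻¹ • ∑ i, v i‖ ^ 2 ≤ (n : ℝ)⁻¹ * ∑ i, ‖v i‖ ^ 2 := by
  have hn0 : (0 : ℝ) < n := by exact_mod_cast hn
  calc ‖(n : ℝ)⁻¹ • ∑ i, v i‖ ^ 2 ≤ ((n : ℝ)⁻¹ * ∑ i, ‖v i‖) ^ 2 := by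
        gcongr
        exact norm_average_le v
    _ = (n : ℝ)⁻¹ ^ 2 * (∑ i, ‖v i‖) ^ 2 := by ring
    _ ≤ (n : ℝ)⁻¹ ^ 2 * (n * ∑ i, ‖v i‖ ^ 2) := by
        gcongr
        simpa using sq_sum_le_card_mul_sum_sq (s := (univ : Finset (Fin n))) (f := fun i => ‖v i‖)
    _ = (n : ℝ)⁻¹ * ∑ i, ‖v i‖ ^ 2 := by
        field_simp

theorem gradient_average {E : Type*} [NormedAddCommGroup E] [InnerProductSpace ℝ E]
    [CompleteSpace E] {n : ℕ} (u : Fin n → E → ℝ) (hdiff : ∀ i, Differentiable ℝ (u i))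
    (U : E → ℝ) (hU : ∀ v, U v = (n : ℝ)⁻¹ * ∑ i, u i v) (v : E) :
    gradient U v = (n : ℝ)⁻¹ • ∑ i, gradient (u i) v := by
  obtain rfl : U = fun v => (n : ℝ)⁻¹ * ∑ i, u i v := funext hU
  have h : HasFDerivAt (fun v => (n : ℝ)⁻¹ * ∑ i, u i v)
      ((n : ℝ)⁻¹ • ∑ i, fderiv ℝ (u i) v) v :=
    (HasFDerivAt.fun_sum fun i _ => (hdiff i v).hasFDerivAt).const_mul _
  simp only [gradient, h.fderiv, map_sum, map_smulₛₗ, conj_trivial]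

theorem stmt16 {n d : ℕ} (hn : 1 ≤ n) (hd : 1 ≤ d) (L : ℝ) (hL : 0 < L)
    (u : Fin n → EuclideanSpace ℝ (Fin d) → ℝ)
    (hdiff : ∀ i, Differentiable ℝ (u i))
    (hlip : ∀ i a b, ‖gradient (u i) a - gradient (u i) b‖ ≤ L * ‖a - b‖)
    (U : EuclideanSpace ℝ (Fin d) → ℝ)
    (hU : ∀ v, U v = (n : ℝ)⁻¹ * ∑ i, u i v)
    (g : Fin n → EuclideanSpace ℝ (Fin d) → EuclideanSpace ℝ (Fin d))
    (hg : ∀ i a b, ‖g i a - g i b‖ ≤ L * ‖a - b‖)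
    (x xhat y z : Fin n → EuclideanSpace ℝ (Fin d))
    (what : Fin n → EuclideanSpace ℝ (Fin d))
    (hwhat : ∀ i, what i = g i (x i) - g i (xhat i) - y i)
    (xbar ybar zbar m : EuclideanSpace ℝ (Fin d))
    (hxbar : xbar = (n : ℝ)⁻¹ • ∑ i, x i)
    (hybar : ybar = (n : ℝ)⁻¹ • ∑ i, y i)
    (hzbar : zbar = (n : ℝ)⁻¹ • ∑ i, z i)
    (hm : m = (n : ℝ)⁻¹ • ∑ i, gradient (u i) (x i))
    (hyz : ybar = zbar) :
    (n : ℝ)⁻¹ * ∑ i, ‖gradient U (xhat i) + what i‖ ^ 2 ≤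
      8 * L ^ 2 / n * ∑ i, ‖xhat i - x i‖ ^ 2
        + 16 * L ^ 2 / n * ∑ i, ‖x i - xbar‖ ^ 2
        + 12 * ‖m - zbar‖ ^ 2
        + 12 / n * ∑ i, ‖y i - ybar‖ ^ 2 := by
  have hn0 : (0 : ℝ) < n := by exact_mod_cast hn
  have hG := gradient_average u hdiff U hU
  have hGlip : ∀ a b, ‖gradient U a - gradient U b‖ ≤ L * ‖a - b‖ := by
    intro a b
    rw [hG, hG, ← smul_sub, ← sum_sub_distrib]
    calc _ ≤ (n : ℝ)⁻¹ * ∑ i, ‖gradient (u i) a - gradient (u i) b‖ := norm_average_le _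
      _ ≤ (n : ℝ)⁻¹ * ∑ _i : Fin n, L * ‖a - b‖ := by
        gcongr with i
        exact hlip i a b
      _ = L * ‖a - b‖ := by
        simp only [sum_const, card_univ, Fintype.card_fin, nsmul_eq_mul]
        field_simp
  have hb : ‖gradient U xbar - m‖ ^ 2 ≤ (n : ℝ)⁻¹ * (L ^ 2 * ∑ i, ‖x i - xbar‖ ^ 2) := by
    rw [hG, hm, ← smul_sub, ← sum_sub_distrib]
    refine (norm_sq_average_le hn _).trans ?_
    rw [mul_sum univ _ (L ^ 2)]
    gcongr with i
    rw [← mul_pow, norm_sub_rev (x i)]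
    gcongr
    exact hlip i _ _
  have hpt : ∀ i, ‖gradient U (xhat i) + what i‖ ^ 2 ≤
      8 * L ^ 2 * ‖xhat i - x i‖ ^ 2 + 8 * L ^ 2 * ‖x i - xbar‖ ^ 2
        + (8 * ‖gradient U xbar - m‖ ^ 2 + 12 * ‖m - zbar‖ ^ 2) + 12 * ‖y i - ybar‖ ^ 2 := by
    intro i
    have hsplit : gradient U (xhat i) + what i =
        ((gradient U (xhat i) - gradient U (x i)) + (g i (x i) - g i (xhat i)))
          + (((gradient U (x i) - gradient U xbar) + (gradient U xbar - m))
            + ((m - zbar) + (ybar - y i))) := by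
      rw [hwhat, hyz]
      abel
    have hq : ‖g i (x i) - g i (xhat i)‖ ≤ L * ‖xhat i - x i‖ := by
      rw [norm_sub_rev (xhat i)]
      exact hg i _ _
    have h := norm_sq_split _ _ _ (gradient U xbar - m) (m - zbar) (ybar - y i)
      (hGlip (xhat i) (x i)) hq (hGlip (x i) xbar)
    rw [hsplit]
    rw [norm_sub_rev ybar (y i), mul_pow, mul_pow] at h
    linarith [sq_nonneg ‖m - zbar‖, sq_nonneg ‖y i - ybar‖]
  calc (n : ℝ)⁻¹ * ∑ i, ‖gradient U (xhat i) + what i‖ ^ 2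
      ≤ (n : ℝ)⁻¹ * ∑ i, (8 * L ^ 2 * ‖xhat i - x i‖ ^ 2 + 8 * L ^ 2 * ‖x i - xbar‖ ^ 2
        + (8 * ‖gradient U xbar - m‖ ^ 2 + 12 * ‖m - zbar‖ ^ 2) + 12 * ‖y i - ybar‖ ^ 2) := by
        gcongr with i
        exact hpt i
    _ = 8 * L ^ 2 / n * ∑ i, ‖xhat i - x i‖ ^ 2 + 8 * L ^ 2 / n * ∑ i, ‖x i - xbar‖ ^ 2
        + (8 * ‖gradient U xbar - m‖ ^ 2 + 12 * ‖m - zbar‖ ^ 2)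
        + 12 / n * ∑ i, ‖y i - ybar‖ ^ 2 := by
        simp only [sum_add_distrib, ← mul_sum, sum_const, card_univ, Fintype.card_fin,
          nsmul_eq_mul]
        field_simp
    _ ≤ 8 * L ^ 2 / n * ∑ i, ‖xhat i - x i‖ ^ 2 + 8 * L ^ 2 / n * ∑ i, ‖x i - xbar‖ ^ 2
        + (8 * ((n : ℝ)⁻¹ * (L ^ 2 * ∑ i, ‖x i - xbar‖ ^ 2)) + 12 * ‖m - zbar‖ ^ 2)
        + 12 / n * ∑ i, ‖y i - ybar‖ ^ 2 := by
        gcongr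
    _ = _ := by ring
end
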